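/- Let (M, W) admit a precofibration category structure (so W satisfies 2-out-of-3 and contains all isomorphisms). Then the following are equivalent: (1) W is weakly saturated (satisfies 2-out-of-3, contains identities, and for i, r with r∘i = id and i∘r ∈ W one has i, r ∈ W); (2) W satisfies the 2-out-of-6 property; (3) W is closed under retracts; (4) W is saturated, i.e. W equals the class of maps becoming isomorphisms in the localization M[W⁻¹]. -/

import Mathlib

open CategoryTheory CategoryTheory.Limits

universe w v u

variable (C : Type u) [Category.{v} C] [HasInitial C]

/-- An Anderson–Brown–Cisinski precofibration category structure on `C`:
classes of weak equivalences `W` and cofibrations `Cof` satisfying the axioms CF1–CF4. -/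
structure PrecofCat where
  /-- the class of weak equivalences -/
  W : MorphismProperty C
  /-- the class of cofibrations -/
  Cof : MorphismProperty C
  /-- CF1: cofibrations are closed under composition -/
  cof_comp : ∀ {X Y Z : C} (f : X ⟶ Y) (g : Y ⟶ Z), Cof f → Cof g → Cof (f ≫ g)
  /-- CF1: the initial object is cofibrant -/
  initial_cofibrant : Cof (initial.to (⊥_ C))
  /-- CF1: isomorphisms are weak equivalences -/
  iso_W : ∀ {X Y : C} (f : X ⟶ Y), IsIso f → W f
  /-- CF1: isomorphisms with cofibrant domain are cofibrations -/
  iso_cof : ∀ {X Y : C} (f : X ⟶ Y), IsIso f → Cof (initial.to X) → Cof f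
  /-- CF2: two-out-of-three -/
  W_comp : ∀ {X Y Z : C} (f : X ⟶ Y) (g : Y ⟶ Z), W f → W g → W (f ≫ g)
  W_cancel_left : ∀ {X Y Z : C} (f : X ⟶ Y) (g : Y ⟶ Z), W f → W (f ≫ g) → W g
  W_cancel_right : ∀ {X Y Z : C} (f : X ⟶ Y) (g : Y ⟶ Z), W g → W (f ≫ g) → W f
  /-- CF3: pushouts of cofibrations with cofibrant corners exist -/
  pushout_exists : ∀ {A B X : C} (i : A ⟶ B) (f : A ⟶ X), Cof i →
      Cof (initial.to A) → Cof (initial.to X) →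
      ∃ (D : C) (g : B ⟶ D) (j : X ⟶ D), IsPushout i f g j
  /-- CF3: the pushout of a cofibration is a cofibration -/
  pushout_cof : ∀ {A B X D : C} (i : A ⟶ B) (f : A ⟶ X) (g : B ⟶ D) (j : X ⟶ D),
      Cof i → Cof (initial.to A) → Cof (initial.to X) → IsPushout i f g j → Cof j
  /-- CF3: the pushout of a trivial cofibration is a trivial cofibration -/
  pushout_triv_cof : ∀ {A B X D : C} (i : A ⟶ B) (f : A ⟶ X) (g : B ⟶ D) (j : X ⟶ D),
      Cof i → W i → Cof (initial.to A) → Cof (initial.to X) → IsPushout i f g j → W j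
  /-- CF4: factorization of maps with cofibrant domain -/
  factorization : ∀ {A B : C} (f : A ⟶ B), Cof (initial.to A) →
      ∃ (Z : C) (f' : A ⟶ Z) (r : Z ⟶ B), Cof f' ∧ W r ∧ f' ≫ r = f

variable {C}

/-- An object is cofibrant if the map from the initial object is a cofibration. -/
def PrecofCat.Cofibrant (P : PrecofCat C) (A : C) : Prop :=
  P.Cof (initial.to A)

/-- `f` is a retract of `g` in the arrow category. -/
def RetractOf {A B X Y : C} (f : A ⟶ B) (g : X ⟶ Y) : Prop :=
  ∃ (iA : A ⟶ X) (rA : X ⟶ A) (iB : B ⟶ Y) (rB : Y ⟶ B),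
    iA ≫ rA = 𝟙 A ∧ iB ≫ rB = 𝟙 B ∧ iA ≫ g = f ≫ iB ∧ g ≫ rB = rA ≫ f

namespace PrecofCat

variable (P : PrecofCat C)

lemma W_id (X : C) : P.W (𝟙 X) := P.iso_W _ inferInstance

variable {P}

lemma Cofibrant.of_cof {A B : C} (hA : P.Cofibrant A) {i : A ⟶ B} (hi : P.Cof i) :
    P.Cofibrant B := by
  have h := P.cof_comp _ _ hA hi
  rwa [Subsingleton.elim (initial.to A ≫ i) (initial.to B)] at h

lemma isIso_Q_map {X Y : C} {f : X ⟶ Y} (hf : P.W f) : IsIso (P.W.Q.map f) :=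
  P.W.Q_inverts f hf

variable (P)

/-- Every object receives a weak equivalence from a cofibrant object. -/
lemma exists_cofibrant_replacement (X : C) :
    ∃ (R : C) (r : R ⟶ X), P.Cofibrant R ∧ P.W r := by
  obtain ⟨R, i, r, hi, hr, -⟩ := P.factorization (initial.to X) P.initial_cofibrant
  exact ⟨R, r, Cofibrant.of_cof P.initial_cofibrant hi, hr⟩

/-- A pair of maps `p`, `r` with cofibrant domains and common codomain factors through a
weak equivalence, by maps which are jointly a cofibration on a coproduct `S`. -/
lemma exists_joint_factorization {A B X : C} (hA : P.Cofibrant A) (hB : P.Cofibrant B)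
    (p : A ⟶ X) (r : B ⟶ X) :
    ∃ (S : C) (inl : A ⟶ S) (inr : B ⟶ S) (Z : C) (c : S ⟶ Z) (q : Z ⟶ X),
      IsPushout (initial.to A) (initial.to B) inl inr ∧ P.Cofibrant S ∧
      P.Cof inl ∧ P.Cof inr ∧ P.Cof c ∧ P.W q ∧ inl ≫ c ≫ q = p ∧ inr ≫ c ≫ q = r := by
  obtain ⟨S, inl, inr, sq⟩ := P.pushout_exists _ (initial.to B) hA P.initial_cofibrant hB
  have hinr : P.Cof inr := P.pushout_cof _ _ _ _ hA P.initial_cofibrant hB sq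
  have hinl : P.Cof inl := P.pushout_cof _ _ _ _ hB P.initial_cofibrant hA sq.flip
  have hS : P.Cofibrant S := hA.of_cof hinl
  obtain ⟨Z, c, q, hc, hq, fac⟩ :=
    P.factorization (sq.desc p r (Subsingleton.elim _ _)) hS
  exact ⟨S, inl, inr, Z, c, q, sq, hS, hinl, hinr, hc, hq, by simp [fac], by simp [fac]⟩

/-- The zigzags `X ⟶ E ⟵ A` whose backward map is a weak equivalence to a cofibrant
object. -/
structure Frac (A X : C) where
  /-- the middle object -/
  E : C
  cofibrant : P.Cofibrant E
  /-- the forward map -/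
  u : X ⟶ E
  /-- the backward map -/
  s : A ⟶ E
  hs : P.W s

variable {P}

/-- Two zigzags are related if there is a map of zigzags between them. -/
def Frac.Rel {A X : C} (x y : P.Frac A X) : Prop :=
  ∃ t : x.E ⟶ y.E, x.u ≫ t = y.u ∧ x.s ≫ t = y.s

variable (P)

/-- Connected components of the zigzags from `X` to `A`. -/
def FracClass (A X : C) : Type (max u v) := Quot (Frac.Rel (P := P) (A := A) (X := X))

variable {P}

/-- Precomposition of zigzags. -/
def Frac.precomp {A X Y : C} (f : X ⟶ Y) (x : P.Frac A Y) : P.Frac A X :=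
  ⟨x.E, x.cofibrant, f ≫ x.u, x.s, x.hs⟩

/-- Precomposition of classes of zigzags. -/
def FracClass.precomp {A X Y : C} (f : X ⟶ Y) : P.FracClass A Y → P.FracClass A X :=
  Quot.map (Frac.precomp f) fun _ _ ⟨t, h₁, h₂⟩ =>
    ⟨t, by simpa [Frac.precomp] using congrArg (f ≫ ·) h₁, h₂⟩

lemma FracClass.precomp_id {A X : C} (x : P.FracClass A X) :
    FracClass.precomp (𝟙 X) x = x := by
  induction x using Quot.ind with
  | mk x => exact congrArg (Quot.mk _) (by cases x; simp [Frac.precomp])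

lemma FracClass.precomp_comp {A X Y Z : C} (f : X ⟶ Y) (g : Y ⟶ Z) (x : P.FracClass A Z) :
    FracClass.precomp (f ≫ g) x = FracClass.precomp f (FracClass.precomp g x) := by
  induction x using Quot.ind with
  | mk x => exact congrArg (Quot.mk _) (by simp [Frac.precomp])

lemma Frac.Rel.W_iff {A X : C} {x y : P.Frac A X} (h : x.Rel y) : P.W x.u ↔ P.W y.u := by
  obtain ⟨t, hu, hs⟩ := h
  have ht : P.W t := P.W_cancel_left _ _ x.hs (hs ▸ y.hs)
  rw [← hu]
  exact ⟨fun h => P.W_comp _ _ h ht, fun h => P.W_cancel_right _ _ ht h⟩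

lemma Frac.W_iff_of_mk_eq {A X : C} {x y : P.Frac A X}
    (h : (Quot.mk _ x : P.FracClass A X) = Quot.mk _ y) : P.W x.u ↔ P.W y.u := by
  have h' := Quot.eqvGen_exact h
  clear h
  induction h' with
  | rel _ _ h => exact h.W_iff
  | refl => rfl
  | symm _ _ _ ih => exact ih.symm
  | trans _ _ _ _ _ ih₁ ih₂ => exact ih₁.trans ih₂

lemma FracClass.precomp_bijective_of_triv_cof {A X Y : C} (hX : P.Cofibrant X)
    {i : X ⟶ Y} (hi : P.Cof i) (hiW : P.W i) :
    Function.Bijective (FracClass.precomp (P := P) (A := A) i) := by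
  have push (x : P.Frac A X) : ∃ (D : C) (g : Y ⟶ D) (j : x.E ⟶ D), IsPushout i x.u g j :=
    P.pushout_exists i x.u hi hX x.cofibrant
  choose D g j sq using push
  let ext (x : P.Frac A X) : P.Frac A Y :=
    ⟨D x, x.cofibrant.of_cof (P.pushout_cof _ _ _ _ hi hX x.cofibrant (sq x)), g x,
      x.s ≫ j x, P.W_comp _ _ x.hs (P.pushout_triv_cof _ _ _ _ hi hiW hX x.cofibrant (sq x))⟩
  have ext_rel {x : P.Frac A X} {y : P.Frac A Y} (h : x.Rel (y.precomp i)) :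
      (ext x).Rel y := by
    obtain ⟨t, hu, hs⟩ := h
    refine ⟨(sq x).desc y.u t hu.symm, (sq x).inl_desc _ _ _, ?_⟩
    exact (Category.assoc _ _ _).trans (((sq x).inr_desc y.u t hu.symm).symm ▸ hs)
  have rel_ext (x : P.Frac A X) : x.Rel ((ext x).precomp i) := ⟨j x, (sq x).w.symm, rfl⟩
  let extClass : P.FracClass A X → P.FracClass A Y := Quot.map ext fun x y h => by
    obtain ⟨t, hu, hs⟩ := h
    refine ext_rel ⟨t ≫ j y, ?_, ?_⟩
    · exact ((reassoc_of% hu) (j y)).trans (sq y).w.symm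
    · exact (reassoc_of% hs) (j y)
  refine Function.bijective_iff_has_inverse.2 ⟨extClass, fun y => ?_, fun x => ?_⟩
  · induction y using Quot.ind with
    | mk y => exact Quot.sound (ext_rel ⟨𝟙 _, Category.comp_id _, Category.comp_id _⟩)
  · induction x using Quot.ind with
    | mk x => exact (Quot.sound (rel_ext x)).symm

lemma FracClass.precomp_bijective {A X Y : C} (hX : P.Cofibrant X) (hY : P.Cofibrant Y)
    {w : X ⟶ Y} (hw : P.W w) :
    Function.Bijective (FracClass.precomp (P := P) (A := A) w) := by
  obtain ⟨S, inl, inr, Z, c, q, -, -, hinl, hinr, hc, hq, hl, hr⟩ :=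
    P.exists_joint_factorization hX hY w (𝟙 Y)
  have hlW : P.W (inl ≫ c) := P.W_cancel_right _ _ hq (by simpa [hl] using hw)
  have hrW : P.W (inr ≫ c) := P.W_cancel_right _ _ hq (by simpa [hr] using P.W_id Y)
  have bl := precomp_bijective_of_triv_cof (A := A) hX (P.cof_comp _ _ hinl hc) hlW
  have br := precomp_bijective_of_triv_cof (A := A) hY (P.cof_comp _ _ hinr hc) hrW
  have bq : Function.Bijective (precomp (P := P) (A := A) q) := by
    rw [← br.of_comp_iff']
    convert Function.bijective_id using 1
    ext x
    simp [← precomp_comp, hr, precomp_id]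
  convert bl.comp bq using 1
  ext x
  simp [← precomp_comp, hl]

variable (P)

/-- The pointwise right Kan extension of `FracClass` from cofibrant objects: compatible
families indexed by the maps from cofibrant objects to `X`. -/
structure FracFamily (A X : C) where
  /-- the values of the family -/
  val : ∀ {X' : C}, P.Cofibrant X' → (X' ⟶ X) → P.FracClass A X'
  precomp_val : ∀ {X' X'' : C} (h' : P.Cofibrant X') (h'' : P.Cofibrant X'')
    (a : X'' ⟶ X') (p : X' ⟶ X), FracClass.precomp a (val h' p) = val h'' (a ≫ p)

variable {P}

lemma FracFamily.ext_val {A X : C} {x y : P.FracFamily A X}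
    (h : ∀ {X' : C} (h' : P.Cofibrant X') (p : X' ⟶ X), x.val h' p = y.val h' p) : x = y := by
  obtain ⟨vx, _⟩ := x
  obtain ⟨vy, _⟩ := y
  have : @vx = @vy := by
    funext X' h' p
    exact h h' p
  subst this
  rfl

/-- Precomposition of families. -/
def FracFamily.precomp {A X Y : C} (f : X ⟶ Y) (x : P.FracFamily A Y) : P.FracFamily A X where
  val h' p := x.val h' (p ≫ f)
  precomp_val h' h'' a p := by simp [x.precomp_val h' h'']

variable (P) in
/-- The families of classes of zigzags form a presheaf. -/
def fracPresheaf (A : C) : C ⥤ (Type (max u v))ᵒᵖ :=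
  Functor.rightOp
    { obj := fun X => P.FracFamily A X.unop
      map := fun f => TypeCat.ofHom (FracFamily.precomp f.unop)
      map_id := fun X => by
        ext x
        exact FracFamily.ext_val fun _ _ => by simp [FracFamily.precomp]
      map_comp := fun f g => by
        ext x
        exact FracFamily.ext_val fun _ _ => by simp [FracFamily.precomp] }

lemma FracFamily.eval_bijective {A R X : C} (hR : P.Cofibrant R) {r : R ⟶ X} (hr : P.W r) :
    Function.Bijective (fun x : P.FracFamily A X => x.val hR r) := by
  have joint {X' : C} (h' : P.Cofibrant X') (p : X' ⟶ X) :=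
    P.exists_joint_factorization h' hR p r
  choose S inl inr Z c q sq hS hinl hinr hc hq hl hrr using @joint
  have hZ {X' : C} (h' : P.Cofibrant X') (p : X' ⟶ X) : P.Cofibrant (Z h' p) :=
    (hS h' p).of_cof (hc h' p)
  have hbW {X' : C} (h' : P.Cofibrant X') (p : X' ⟶ X) : P.W (inr h' p ≫ c h' p) :=
    P.W_cancel_right _ _ (hq h' p) (by simpa [hrr] using hr)
  have hb {X' : C} (h' : P.Cofibrant X') (p : X' ⟶ X) :
      Function.Bijective (FracClass.precomp (P := P) (A := A) (inr h' p ≫ c h' p)) :=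
    FracClass.precomp_bijective hR (hZ h' p) (hbW h' p)
  constructor
  · intro x y hxy
    refine FracFamily.ext_val fun {X'} h' p => ?_
    have key : x.val (hZ h' p) (q h' p) = y.val (hZ h' p) (q h' p) := by
      apply (hb h' p).1
      simpa [FracFamily.precomp_val _ _ hR, hrr] using hxy
    simpa [FracFamily.precomp_val _ _ h', hl] using
      congrArg (FracClass.precomp (inl h' p ≫ c h' p)) key
  · intro x
    choose z hz using fun {X' : C} (h' : P.Cofibrant X') (p : X' ⟶ X) => (hb h' p).2 x
    have indep {X' : C} (h' : P.Cofibrant X') (p : X' ⟶ X) {T : C} (hT : P.Cofibrant T)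
        (a : X' ⟶ T) (b : R ⟶ T) (t : T ⟶ X) (hat : a ≫ t = p) (hbt : b ≫ t = r)
        (ht : P.W t) (y : P.FracClass A T) (hy : FracClass.precomp b y = x) :
        FracClass.precomp (inl h' p ≫ c h' p) (z h' p) = FracClass.precomp a y := by
      let d : S h' p ⟶ T := (sq h' p).desc a b (Subsingleton.elim _ _)
      have hda : inl h' p ≫ d = a := (sq h' p).inl_desc _ _ _
      have hdb : inr h' p ≫ d = b := (sq h' p).inr_desc _ _ _
      obtain ⟨D, g, j, po⟩ := P.pushout_exists (c h' p) d (hc h' p) (hS h' p) hT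
      have hD : P.Cofibrant D := hT.of_cof (P.pushout_cof _ _ _ _ (hc h' p) (hS h' p) hT po)
      have comm : c h' p ≫ q h' p = d ≫ t := by
        apply (sq h' p).hom_ext
        · rw [hl, reassoc_of% hda, hat]
        · rw [hrr, reassoc_of% hdb, hbt]
      obtain ⟨V, e, o, he, ho, fac⟩ := P.factorization (po.desc (q h' p) t comm) hD
      have hV : P.Cofibrant V := hD.of_cof he
      have hjW : P.W (j ≫ e) := P.W_cancel_right _ _ ho (by simpa [fac] using ht)
      obtain ⟨v, hv⟩ := (FracClass.precomp_bijective (A := A) hT hV hjW).2 y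
      have hgv : FracClass.precomp (g ≫ e) v = z h' p := by
        apply (hb h' p).1
        rw [hz, ← hy, ← hv, ← FracClass.precomp_comp, ← FracClass.precomp_comp]
        simp [reassoc_of% po.w, reassoc_of% hdb]
      rw [← hgv, ← hv, ← FracClass.precomp_comp, ← FracClass.precomp_comp]
      simp [reassoc_of% po.w, reassoc_of% hda]
    refine ⟨⟨fun h' p => FracClass.precomp (inl h' p ≫ c h' p) (z h' p), ?_⟩, ?_⟩
    · intro X' X'' h' h'' a p
      rw [← FracClass.precomp_comp]
      exact (indep h'' (a ≫ p) (hZ h' p) _ (inr h' p ≫ c h' p) (q h' p)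
        (by simp [hl]) (by simp [hrr]) (hq h' p) _ (hz h' p)).symm
    · have := indep hR r hR (𝟙 R) (𝟙 R) r (by simp) (by simp) hr x (FracClass.precomp_id x)
      exact this.trans (FracClass.precomp_id x)

lemma FracFamily.precomp_bijective {A X Y : C} {w : X ⟶ Y} (hw : P.W w) :
    Function.Bijective (FracFamily.precomp (P := P) (A := A) w) := by
  obtain ⟨R, r, hR, hr⟩ := P.exists_cofibrant_replacement X
  rw [← (FracFamily.eval_bijective (A := A) hR hr).of_comp_iff']
  exact FracFamily.eval_bijective hR (P.W_comp _ _ hr hw)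

variable (P) in
lemma fracPresheaf_inverts (A : C) : P.W.IsInvertedBy (P.fracPresheaf A) := by
  intro X Y w hw
  have : IsIso (TypeCat.ofHom (FracFamily.precomp (P := P) (A := A) w)) :=
    (isIso_iff_bijective _).2 (FracFamily.precomp_bijective hw)
  exact inferInstanceAs (IsIso (TypeCat.ofHom (FracFamily.precomp (P := P) (A := A) w)).op)

lemma FracFamily.precomp_bijective_of_isIso_Q_map {A X Y : C} {f : X ⟶ Y}
    (hf : IsIso (P.W.Q.map f)) :
    Function.Bijective (FracFamily.precomp (P := P) (A := A) f) := by
  have h : IsIso ((P.fracPresheaf A).map f) := by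
    rw [← (Localization.Construction.fac _ (P.fracPresheaf_inverts A))]
    exact inferInstanceAs (IsIso ((Localization.Construction.lift (P.fracPresheaf A)
      (P.fracPresheaf_inverts A)).map (P.W.Q.map f)))
  have hiso : IsIso (TypeCat.ofHom (FracFamily.precomp (P := P) (A := A) f)) :=
    inferInstanceAs (IsIso ((P.fracPresheaf A).map f).unop)
  exact (isIso_iff_bijective _).1 hiso

/-- The family represented by the identity of a cofibrant object. -/
def FracFamily.id {A : C} (hA : P.Cofibrant A) : P.FracFamily A A where
  val _ p := Quot.mk _ ⟨A, hA, p, 𝟙 A, P.W_id A⟩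
  precomp_val _ _ _ _ := rfl

/-- A map between cofibrant objects which becomes invertible in the localization can be
postcomposed to a weak equivalence. -/
lemma exists_comp_W {A B : C} (hA : P.Cofibrant A) (hB : P.Cofibrant B) {f : A ⟶ B}
    (hf : IsIso (P.W.Q.map f)) : ∃ (E : C) (g : B ⟶ E), P.Cofibrant E ∧ P.W (f ≫ g) := by
  obtain ⟨y, hy⟩ := (FracFamily.precomp_bijective_of_isIso_Q_map (A := A) hf).2
    (FracFamily.id hA)
  have h : FracClass.precomp f (y.val hB (𝟙 B)) = (FracFamily.id hA).val hA (𝟙 A) := by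
    rw [← hy, y.precomp_val hB hA]
    simp [FracFamily.precomp]
  obtain ⟨x, hx⟩ := Quot.exists_rep (y.val hB (𝟙 B))
  rw [← hx] at h
  exact ⟨x.E, x.u, x.cofibrant, (Frac.W_iff_of_mk_eq h).2 (P.W_id A)⟩

variable (P)

/-- The property that a section which is invertible up to weak equivalence is a weak equivalence. -/
def WeaklySaturated : Prop :=
  ∀ (X Y : C) (i : X ⟶ Y) (r : Y ⟶ X), i ≫ r = 𝟙 X → P.W (r ≫ i) → P.W i ∧ P.W r

/-- The 2-out-of-6 property. -/
def TwoOutOfSix : Prop :=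
  ∀ (X Y Z T : C) (f : X ⟶ Y) (g : Y ⟶ Z) (h : Z ⟶ T),
    P.W (f ≫ g) → P.W (g ≫ h) → P.W f ∧ P.W g ∧ P.W h ∧ P.W (f ≫ g ≫ h)

variable {P}

lemma WeaklySaturated.W_middle (hP : P.WeaklySaturated) {X Y Z T : C} (hX : P.Cofibrant X)
    {f : X ⟶ Y} {g : Y ⟶ Z} {h : Z ⟶ T} (hf : P.Cof f) (hg : P.Cof g)
    (hfg : P.W (f ≫ g)) (hgh : P.W (g ≫ h)) : P.W g := by
  have hY : P.Cofibrant Y := hX.of_cof hf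
  have hfgc : P.Cof (f ≫ g) := P.cof_comp _ _ hf hg
  obtain ⟨D, k, j, sq⟩ := P.pushout_exists (f ≫ g) f hfgc hX hY
  have hj : P.W j := P.pushout_triv_cof _ _ _ _ hfgc hfg hX hY sq
  let p : D ⟶ T := sq.desc h (g ≫ h) (by simp)
  let r : D ⟶ Z := sq.desc (𝟙 Z) g (by simp)
  have hkp : k ≫ p = h := sq.inl_desc _ _ _
  have hjp : j ≫ p = g ≫ h := sq.inr_desc _ _ _
  have hkr : k ≫ r = 𝟙 Z := sq.inl_desc _ _ _
  have hjr : j ≫ r = g := sq.inr_desc _ _ _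
  have hp : P.W p := P.W_cancel_left _ _ hj (hjp ▸ hgh)
  have hrkp : (r ≫ k) ≫ p = p := by
    apply sq.hom_ext
    · rw [Category.assoc, reassoc_of% hkr]
    · rw [Category.assoc, reassoc_of% hjr, hkp, hjp]
  have hr : P.W r := (hP _ _ k r hkr (P.W_cancel_right _ _ hp (hrkp.symm ▸ hp))).2
  exact hjr ▸ P.W_comp _ _ hj hr

lemma WeaklySaturated.twoOutOfSix (hP : P.WeaklySaturated) : P.TwoOutOfSix := by
  intro X Y Z T f g h hfg hgh
  obtain ⟨X', x, hX', hx⟩ := P.exists_cofibrant_replacement X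
  obtain ⟨Y', f', y, hf', hy, hf⟩ := P.factorization (x ≫ f) hX'
  obtain ⟨Z', g', z, hg', hz, hg⟩ := P.factorization (y ≫ g) (hX'.of_cof hf')
  have hfg' : P.W (f' ≫ g') := by
    refine P.W_cancel_right _ z hz ?_
    rw [Category.assoc, hg, reassoc_of% hf]
    exact P.W_comp _ _ hx hfg
  have hgh' : P.W (g' ≫ z ≫ h) := by
    rw [reassoc_of% hg]
    exact P.W_comp _ _ hy hgh
  have hgW' : P.W g' := hP.W_middle hX' hf' hg' hfg' hgh'
  have hgW : P.W g := P.W_cancel_left y g hy (hg ▸ P.W_comp _ _ hgW' hz)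
  have hfW : P.W f := P.W_cancel_right _ _ hgW hfg
  exact ⟨hfW, hgW, P.W_cancel_left _ _ hgW hgh, P.W_comp _ _ hfW hgh⟩

lemma TwoOutOfSix.W_of_isIso_Q_map (hP : P.TwoOutOfSix) {X Y : C} {f : X ⟶ Y}
    (hf : IsIso (P.W.Q.map f)) : P.W f := by
  obtain ⟨X', x, hX', hx⟩ := P.exists_cofibrant_replacement X
  obtain ⟨Y', f', y, hf', hy, fac⟩ := P.factorization (x ≫ f) hX'
  have hY' : P.Cofibrant Y' := Cofibrant.of_cof hX' hf'
  have := isIso_Q_map hx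
  have := isIso_Q_map hy
  have hQ : IsIso (P.W.Q.map f') := by
    have : IsIso (P.W.Q.map f' ≫ P.W.Q.map y) := by
      rw [← Functor.map_comp, fac, Functor.map_comp]
      infer_instance
    exact IsIso.of_isIso_comp_right _ (P.W.Q.map y)
  obtain ⟨E, g, hE, hfg⟩ := exists_comp_W hX' hY' hQ
  have hQg : IsIso (P.W.Q.map g) := by
    have : IsIso (P.W.Q.map f' ≫ P.W.Q.map g) := by
      rw [← Functor.map_comp]
      exact isIso_Q_map hfg
    exact IsIso.of_isIso_comp_left (P.W.Q.map f') _
  obtain ⟨_, h, -, hgh⟩ := exists_comp_W hY' hE hQg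
  have hfW : P.W f' := (hP _ _ _ _ f' g h hfg hgh).1
  exact P.W_cancel_left x f hx (fac ▸ P.W_comp _ _ hfW hy)

lemma isIso_Q_map_of_retractOf {A B X Y : C} {f : A ⟶ B} {g : X ⟶ Y} (h : RetractOf f g)
    [IsIso (P.W.Q.map g)] : IsIso (P.W.Q.map f) := by
  obtain ⟨iA, rA, iB, rB, hA, hB, hi, hr⟩ := h
  refine ⟨P.W.Q.map iB ≫ inv (P.W.Q.map g) ≫ P.W.Q.map rA, ?_, ?_⟩
  · rw [← Functor.map_comp_assoc, ← hi, Functor.map_comp_assoc, IsIso.hom_inv_id_assoc,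
      ← Functor.map_comp, hA, CategoryTheory.Functor.map_id]
  · rw [Category.assoc, Category.assoc, ← Functor.map_comp, ← hr, Functor.map_comp,
      IsIso.inv_hom_id_assoc, ← Functor.map_comp, hB, CategoryTheory.Functor.map_id]

end PrecofCat

/-- For a category pair admitting a precofibration structure, the following are
equivalent: (1) the weak equivalences are weakly saturated; (2) they satisfy the
2-out-of-6 property; (3) they are closed under retracts; (4) they are saturated, i.e.
a map is a weak equivalence iff it becomes an isomorphism in the localization. -/
theorem saturation_tfae (P : PrecofCat C) :
    List.TFAE
      [ -- (1) weak saturation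
        (∀ X : C, P.W (𝟙 X)) ∧
        (∀ (X Y Z : C) (f : X ⟶ Y) (g : Y ⟶ Z),
          (P.W f → P.W g → P.W (f ≫ g)) ∧ (P.W f → P.W (f ≫ g) → P.W g) ∧
          (P.W g → P.W (f ≫ g) → P.W f)) ∧
        (∀ (X Y : C) (i : X ⟶ Y) (r : Y ⟶ X),
          i ≫ r = 𝟙 X → P.W (r ≫ i) → P.W i ∧ P.W r),
        -- (2) the 2-out-of-6 property
        ∀ (X Y Z T : C) (f : X ⟶ Y) (g : Y ⟶ Z) (h : Z ⟶ T),
          P.W (f ≫ g) → P.W (g ≫ h) →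
          P.W f ∧ P.W g ∧ P.W h ∧ P.W (f ≫ g ≫ h),
        -- (3) closure under retracts
        ∀ (A B X Y : C) (f : A ⟶ B) (g : X ⟶ Y), RetractOf f g → P.W g → P.W f,
        -- (4) saturation
        ∀ (X Y : C) (f : X ⟶ Y), P.W f ↔ IsIso (P.W.Q.map f) ] := by
  tfae_have 1 → 2 := fun h => PrecofCat.WeaklySaturated.twoOutOfSix h.2.2
  tfae_have 2 → 4 := fun h _ _ _ =>
    ⟨PrecofCat.isIso_Q_map, PrecofCat.TwoOutOfSix.W_of_isIso_Q_map h⟩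
  tfae_have 4 → 3 := fun h A B X Y f g hfg hg => by
    have := (h _ _ g).1 hg
    exact (h _ _ f).2 (PrecofCat.isIso_Q_map_of_retractOf hfg)
  tfae_have 3 → 1 := fun h => by
    refine ⟨P.W_id, fun X Y Z f g => ⟨P.W_comp f g, P.W_cancel_left f g,
      P.W_cancel_right f g⟩, fun X Y i r hir hri => ?_⟩
    have hi : P.W i := h _ _ _ _ i (r ≫ i)
      ⟨i, r, 𝟙 Y, 𝟙 Y, hir, by simp, by simp [reassoc_of% hir], by simp⟩ hri
    exact ⟨hi, P.W_cancel_right r i hi hri⟩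
  tfae_finish
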